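/- For every n ∈ ℕ, ∑_{k=0}^{n} \binom{n}{k}(-1)^k F_k = -F_n and ∑_{k=0}^{n} \binom{n}{k}(-1)^k L_k = L_n, where F and L are the Fibonacci and Lucas sequences. In other words, the Lucas sequence is an invariant sequence of the first kind and the Fibonacci sequence is an inverse invariant sequence of the first kind. -/

import Mathlib

/-- The Lucas sequence: L 0 = 2, L 1 = 1, L (n+2) = L (n+1) + L n. -/
def lucas : ℕ → ℕ
  | 0 => 2
  | 1 => 1
  | n + 2 => lucas (n + 1) + lucas n

/-!
The transform `T a n = ∑ k ≤ n, (n.choose k) (-1) ^ k (a k)` turns the shift `E` into `1 - E`, by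
Pascal's rule. If `E ^ 2 = E + q` on `a`, then also `(1 - E) ^ 2 = (1 - E) + q` on `a`, so `T a`
satisfies the same recurrence `u (n + 2) = u (n + 1) + q * u n` as `a`. Hence `T a = ± a` can be
read off from the first two terms, which are `a 0` and `a 0 - a 1` for `T a`.
-/

section BinomialTransform

variable {R : Type*} [CommRing R]

/-- The alternating binomial transform of sequences, the involution whose eigensequences for the
eigenvalues `1` and `-1` are the invariant and the inverse invariant sequences of the first kind. -/
def binomialTransform : (ℕ → R) →ₗ[R] (ℕ → R) where
  toFun a n := ∑ k ∈ Finset.range (n + 1), (n.choose k : R) * (-1) ^ k * a k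
  map_add' a b := by
    ext n
    simp only [Pi.add_apply, mul_add, Finset.sum_add_distrib]
  map_smul' c a := by
    ext n
    simp only [Pi.smul_apply, smul_eq_mul, Finset.mul_sum, RingHom.id_apply, mul_left_comm]

theorem binomialTransform_apply (a : ℕ → R) (n : ℕ) :
    binomialTransform a n = ∑ k ∈ Finset.range (n + 1), (n.choose k : R) * (-1) ^ k * a k :=
  rfl

theorem binomialTransform_zero (a : ℕ → R) : binomialTransform a 0 = a 0 := by
  simp [binomialTransform_apply]

theorem binomialTransform_succ (a : ℕ → R) (n : ℕ) :
    binomialTransform a (n + 1) =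
      binomialTransform a n - binomialTransform (fun k ↦ a (k + 1)) n := by
  simp only [binomialTransform_apply, mul_assoc]
  rw [Finset.sum_choose_succ_mul (fun k _ ↦ (-1) ^ k * a k), sub_eq_add_neg,
    ← Finset.sum_neg_distrib]
  congr 1
  exact Finset.sum_congr rfl fun k _ ↦ by ring

theorem binomialTransform_one (a : ℕ → R) : binomialTransform a 1 = a 0 - a 1 := by
  rw [binomialTransform_succ, binomialTransform_zero, binomialTransform_zero]

/-- An invariant sequence of the first kind: a fixed point of the binomial transform. -/
def IsInvariantSeq (a : ℕ → R) : Prop :=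
  binomialTransform a = a

/-- An inverse invariant sequence of the first kind: a sequence that the binomial transform
negates. -/
def IsInverseInvariantSeq (a : ℕ → R) : Prop :=
  binomialTransform a = -a

end BinomialTransform

section Recurrence

variable {R : Type*}

/-- The recurrence `u (n + 2) = u (n + 1) + q * u n`, whose characteristic roots add up to `1`.
Coefficients are listed from the lowest term up; `q = 1` gives `Real.fibRec` by definition. -/
def unitTraceRec [CommSemiring R] (q : R) : LinearRecurrence R where
  order := 2
  coeffs := ![q, 1]

theorem unitTraceRec_isSolution_iff [CommSemiring R] {q : R} {u : ℕ → R} :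
    (unitTraceRec q).IsSolution u ↔ ∀ n, u (n + 2) = u (n + 1) + q * u n := by
  refine forall_congr' fun n ↦ ?_
  rw [add_comm (u (n + 1))]
  change u (n + 2) = ∑ i : Fin 2, ![q, 1] i * u (n + i) ↔ _
  simp [Fin.sum_univ_two]

theorem unitTraceRec_isSolution_ext_iff [CommSemiring R] {q : R} {u v : ℕ → R}
    (hu : (unitTraceRec q).IsSolution u) (hv : (unitTraceRec q).IsSolution v) :
    u = v ↔ u 0 = v 0 ∧ u 1 = v 1 := by
  rw [LinearRecurrence.eq_iff_eqOn_range_order _ u v hu hv]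
  simp [unitTraceRec, Finset.range_add_one, Set.EqOn, and_comm]

variable [CommRing R] {q : R} {a : ℕ → R}

theorem unitTraceRec_isSolution_binomialTransform (ha : (unitTraceRec q).IsSolution a) :
    (unitTraceRec q).IsSolution (binomialTransform a) := by
  rw [unitTraceRec_isSolution_iff] at ha ⊢
  intro n
  have transform_shift_twice : binomialTransform (fun k ↦ a (k + 2)) n =
      binomialTransform (fun k ↦ a (k + 1)) n + q * binomialTransform a n := by
    rw [show (fun k ↦ a (k + 2)) = (fun k ↦ a (k + 1)) + q • a from funext ha, map_add, map_smul]
    rfl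
  calc
    binomialTransform a (n + 2)
    _ = binomialTransform a (n + 1) - binomialTransform (fun k ↦ a (k + 1)) (n + 1) :=
      binomialTransform_succ a (n + 1)
    _ = binomialTransform a (n + 1) -
        (binomialTransform (fun k ↦ a (k + 1)) n - binomialTransform (fun k ↦ a (k + 2)) n) := by
      rw [binomialTransform_succ (fun k ↦ a (k + 1)) n]
    _ = binomialTransform a (n + 1) + q * binomialTransform a n := by
      rw [transform_shift_twice, sub_add_cancel_left, sub_neg_eq_add]

theorem isInvariantSeq_iff_of_isSolution (ha : (unitTraceRec q).IsSolution a) :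
    IsInvariantSeq a ↔ a 0 = 2 * a 1 := by
  rw [IsInvariantSeq,
    unitTraceRec_isSolution_ext_iff (unitTraceRec_isSolution_binomialTransform ha) ha,
    binomialTransform_zero, binomialTransform_one, sub_eq_iff_eq_add, two_mul]
  exact and_iff_right rfl

theorem isInverseInvariantSeq_iff_of_isSolution (ha : (unitTraceRec q).IsSolution a) :
    IsInverseInvariantSeq a ↔ a 0 = 0 := by
  have neg_isSolution : (unitTraceRec q).IsSolution (-a) := (unitTraceRec q).solSpace.neg_mem ha
  rw [IsInverseInvariantSeq, unitTraceRec_isSolution_ext_iff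
    (unitTraceRec_isSolution_binomialTransform ha) neg_isSolution,
    binomialTransform_zero, binomialTransform_one]
  simp +contextual [sub_eq_neg_self]

end Recurrence

theorem lucas_isSolution_fibRec {R : Type*} [CommSemiring R] :
    Real.fibRec.IsSolution (fun n ↦ (lucas n : R)) :=
  unitTraceRec_isSolution_iff (q := 1) |>.2 fun n ↦ by simp [lucas]

theorem stmt1_general (R : Type*) [CommRing R] :
    IsInverseInvariantSeq (fun n ↦ (Nat.fib n : R)) ∧ IsInvariantSeq (fun n ↦ (lucas n : R)) :=
  ⟨(isInverseInvariantSeq_iff_of_isSolution (q := 1) Real.fib_isSol_fibRec).2 (by simp),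
    (isInvariantSeq_iff_of_isSolution (q := 1) lucas_isSolution_fibRec).2 (by simp [lucas])⟩

/-- the Fibonacci sequence is an inverse invariant sequence of the
first kind and the Lucas sequence is an invariant sequence of the first kind. -/
theorem stmt1 (n : ℕ) :
    (∑ k ∈ Finset.range (n + 1), (Nat.choose n k : ℝ) * (-1) ^ k * (Nat.fib k : ℝ))
      = -(Nat.fib n : ℝ) ∧
    (∑ k ∈ Finset.range (n + 1), (Nat.choose n k : ℝ) * (-1) ^ k * (lucas k : ℝ))
      = (lucas n : ℝ) :=
  (stmt1_general ℝ).imp (congrFun · n) (congrFun · n)
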